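/- Let (g, δ, S) be a Nijenhuis Lie coalgebra over a field k. Define δ_S : g → g ⊗ g by δ_S(x) := (S ⊗ id + id ⊗ S)(δ(x)) − δ(S x). Then (g, δ_S) is a Lie coalgebra (δ_S is co-antisymmetric and satisfies the co-Jacobi identity), and S is a homomorphism of Lie coalgebras from (g, δ) to (g, δ_S), i.e. δ_S(S x) = (S ⊗ S)(δ(x)) for all x ∈ g. -/

import Mathlib

/-!
Write `S₁, S₂, S₃` for `S` acting on one leg of `g ⊗ (g ⊗ g)`, and `D = (id ⊗ δ) δ`. Expanding
`(id ⊗ δ_S) δ_S` and using the Nijenhuis identity twice (once on `δ x`, once inside the second leg)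
gives

`(id ⊗ δ_S) δ_S = (S₁S₂ + S₁S₃ + S₂S₃) D - (S₁ + S₂ + S₃) D S + D S²`,

which is `coiterate_deformCo`. The operators in front of `D` are symmetric in the three legs, so
they commute with `1 + σ + σ²`, and the co-Jacobi identity for `δ` at `x`, `S x` and `S² x` kills
each term. Co-antisymmetry holds because `S ⊗ id + id ⊗ S` commutes with the flip, and the
homomorphism property is the Nijenhuis identity itself.
-/

open TensorProduct

noncomputable section

/-- The cyclic permutation `x ⊗ y ⊗ z ↦ y ⊗ z ⊗ x` on `g ⊗ (g ⊗ g)`. -/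
def cyc (K : Type*) [Field K] (g : Type*) [AddCommGroup g] [Module K g] :
    g ⊗[K] (g ⊗[K] g) →ₗ[K] g ⊗[K] (g ⊗[K] g) :=
  (LinearMap.lTensor g (TensorProduct.comm K g g).toLinearMap) ∘ₗ
    (TensorProduct.leftComm K g g g).toLinearMap

/-- The coproduct deformed by a linear map `T`:
`δ_T(x) = (T ⊗ id + id ⊗ T)(δ x) − δ(T x)`. -/
def deformCo {K : Type*} [Field K] {g : Type*} [AddCommGroup g] [Module K g]
    (δ : g →ₗ[K] g ⊗[K] g) (T : g →ₗ[K] g) : g →ₗ[K] g ⊗[K] g :=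
  (LinearMap.rTensor g T + LinearMap.lTensor g T) ∘ₗ δ - δ ∘ₗ T

open LinearMap

section

variable {K : Type*} [Field K] {g : Type*} [AddCommGroup g] [Module K g]

/-- The operator `1 + σ + σ²` on `g ⊗ (g ⊗ g)`. -/
def cycSum (K : Type*) [Field K] (g : Type*) [AddCommGroup g] [Module K g] :
    g ⊗[K] (g ⊗[K] g) →ₗ[K] g ⊗[K] (g ⊗[K] g) :=
  LinearMap.id + cyc K g + cyc K g ∘ₗ cyc K g

/-- The first elementary symmetric operator `S₁ + S₂ + S₃` on `g ⊗ (g ⊗ g)`. -/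
def esymmOne (S : g →ₗ[K] g) : g ⊗[K] (g ⊗[K] g) →ₗ[K] g ⊗[K] (g ⊗[K] g) :=
  rTensor (g ⊗[K] g) S + lTensor g (rTensor g S) + lTensor g (lTensor g S)

/-- The second elementary symmetric operator `S₁S₂ + S₁S₃ + S₂S₃` on `g ⊗ (g ⊗ g)`. -/
def esymmTwo (S : g →ₗ[K] g) : g ⊗[K] (g ⊗[K] g) →ₗ[K] g ⊗[K] (g ⊗[K] g) :=
  TensorProduct.map S (rTensor g S) + TensorProduct.map S (lTensor g S) +
    lTensor g (TensorProduct.map S S)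

theorem cyc_tmul (x y z : g) : cyc K g (x ⊗ₜ (y ⊗ₜ z)) = y ⊗ₜ (z ⊗ₜ x) := by
  simp [cyc]

theorem cycSum_esymmOne (S : g →ₗ[K] g) (t : g ⊗[K] (g ⊗[K] g)) :
    cycSum K g (esymmOne S t) = esymmOne S (cycSum K g t) := by
  suffices h : cycSum K g ∘ₗ esymmOne S = esymmOne S ∘ₗ cycSum K g from LinearMap.congr_fun h t
  ext x y z
  simp [cycSum, esymmOne, cyc_tmul]
  abel

theorem cycSum_esymmTwo (S : g →ₗ[K] g) (t : g ⊗[K] (g ⊗[K] g)) :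
    cycSum K g (esymmTwo S t) = esymmTwo S (cycSum K g t) := by
  suffices h : cycSum K g ∘ₗ esymmTwo S = esymmTwo S ∘ₗ cycSum K g from LinearMap.congr_fun h t
  ext x y z
  simp [cycSum, esymmTwo, cyc_tmul]
  abel

/-- The iterated deformed coproduct in terms of the original one, for `S` satisfying the
Nijenhuis identity: `(S₁S₂ + S₁S₃ + S₂S₃) D - (S₁ + S₂ + S₃) D S + D S²` with
`D = (id ⊗ δ) δ`. -/
theorem coiterate_deformCo (δ : g →ₗ[K] g ⊗[K] g) (S : g →ₗ[K] g)
    (hS : ∀ x : g, TensorProduct.map S S (δ x) =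
      (rTensor g S + lTensor g S) (δ (S x)) - δ (S (S x))) (x : g) :
    lTensor g (deformCo δ S) (deformCo δ S x) =
      esymmTwo S (lTensor g δ (δ x)) - esymmOne S (lTensor g δ (δ (S x))) +
        lTensor g δ (δ (S (S x))) := by
  -- The Nijenhuis identity in the second leg, as an identity of maps out of `g ⊗ g`.
  have inner (t : g ⊗[K] g) : lTensor g (TensorProduct.map S S) (lTensor g δ t) =
      lTensor g (rTensor g S) (lTensor g δ (lTensor g S t)) +
        lTensor g (lTensor g S) (lTensor g δ (lTensor g S t)) -
        lTensor g δ (lTensor g S (lTensor g S t)) := by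
    induction t with
    | zero => simp
    | tmul a b => simp [hS, TensorProduct.tmul_add, TensorProduct.tmul_sub]
    | add a b ha hb => simp only [map_add, ha, hb]; abel
  -- The Nijenhuis identity at `x`, after applying `id ⊗ δ`.
  have outer := congrArg (lTensor g δ) (hS x)
  have expand (t : g ⊗[K] g) : lTensor g (deformCo δ S) t =
      lTensor g (rTensor g S) (lTensor g δ t) + lTensor g (lTensor g S) (lTensor g δ t) -
        lTensor g δ (lTensor g S t) := by
    induction t with
    | zero => simp
    | tmul a b => simp [deformCo, TensorProduct.tmul_add]
    | add a b ha hb => simp only [map_add, ha, hb]; abel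
  have comm₁ (t : g ⊗[K] g) : lTensor g δ (rTensor g S t) =
      rTensor (g ⊗[K] g) S (lTensor g δ t) := by
    simp only [← comp_apply, lTensor_comp_rTensor, rTensor_comp_lTensor]
  have comm₂ (f : g ⊗[K] g →ₗ[K] g ⊗[K] g) (t : g ⊗[K] (g ⊗[K] g)) :
      lTensor g f (rTensor (g ⊗[K] g) S t) = TensorProduct.map S f t := by
    simp only [← comp_apply, lTensor_comp_rTensor]
  have comm₃ (t : g ⊗[K] g) : lTensor g S (rTensor g S t) = TensorProduct.map S S t := by
    simp only [← comp_apply, lTensor_comp_rTensor]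
  have hx : deformCo δ S x = rTensor g S (δ x) + lTensor g S (δ x) - δ (S x) := by
    simp [deformCo]
  rw [expand, hx]
  simp only [map_add, map_sub, LinearMap.add_apply, comm₁, comm₂, comm₃] at outer ⊢
  simp only [esymmOne, esymmTwo, LinearMap.add_apply, inner, outer]
  abel

end

/-- For a Nijenhuis Lie coalgebra `(g, δ, S)`, the deformed coproduct `δ_S` makes `g` a
Lie coalgebra and `S` is a Lie coalgebra homomorphism from `(g, δ)` to `(g, δ_S)`. -/
theorem deformed_lie_coalgebra
    {K : Type*} [Field K] {g : Type*} [AddCommGroup g] [Module K g]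
    (δ : g →ₗ[K] g ⊗[K] g)
    (hanti : ∀ x : g, δ x = - (TensorProduct.comm K g g) (δ x))
    (hcojac : ∀ x : g,
      (LinearMap.lTensor g δ) (δ x) + cyc K g ((LinearMap.lTensor g δ) (δ x)) +
        cyc K g (cyc K g ((LinearMap.lTensor g δ) (δ x))) = 0)
    (S : g →ₗ[K] g)
    (hS : ∀ x : g,
      TensorProduct.map S S (δ x) =
        (LinearMap.rTensor g S + LinearMap.lTensor g S) (δ (S x)) - δ (S (S x))) :
    (∀ x : g, deformCo δ S x = - (TensorProduct.comm K g g) (deformCo δ S x)) ∧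
    (∀ x : g,
      (LinearMap.lTensor g (deformCo δ S)) (deformCo δ S x) +
        cyc K g ((LinearMap.lTensor g (deformCo δ S)) (deformCo δ S x)) +
        cyc K g (cyc K g ((LinearMap.lTensor g (deformCo δ S)) (deformCo δ S x))) = 0) ∧
    (∀ x : g, deformCo δ S (S x) = TensorProduct.map S S (δ x)) := by
  refine ⟨fun x => ?_, fun x => ?_, fun x => ?_⟩
  · have flip (t : g ⊗[K] g) : TensorProduct.comm K g g ((rTensor g S + lTensor g S) t) =
        (rTensor g S + lTensor g S) (TensorProduct.comm K g g t) := by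
      induction t with
      | zero => simp
      | tmul a b => simp [add_comm]
      | add a b ha hb => simp only [map_add, ha, hb]
    have h₁ : TensorProduct.comm K g g (δ x) = -δ x := by
      rw [eq_neg_iff_add_eq_zero, add_comm, ← eq_neg_iff_add_eq_zero]; exact hanti x
    have h₂ : TensorProduct.comm K g g (δ (S x)) = -δ (S x) := by
      rw [eq_neg_iff_add_eq_zero, add_comm, ← eq_neg_iff_add_eq_zero]; exact hanti (S x)
    simp only [deformCo, LinearMap.sub_apply, comp_apply, map_sub, flip, h₁, h₂, map_neg]
    abel
  · have hN (y : g) : cycSum K g (lTensor g δ (δ y)) = 0 := hcojac y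
    change cycSum K g (lTensor g (deformCo δ S) (deformCo δ S x)) = 0
    rw [coiterate_deformCo δ S hS, map_add, map_sub, cycSum_esymmTwo, cycSum_esymmOne,
      hN, hN, hN]
    simp
  · exact (hS x).symm

end
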